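/- Proposition 3.1: Let Ω ⊆ ℂⁿ be a convex open set and let f ∈ A^∞(Ω), i.e., f is holomorphic on Ω and for every multi-index ℓ ∈ ℕⁿ the partial derivative D^ℓ f extends continuously to the closure of Ω. Then for every compact set L contained in the closure of Ω, every finite set F of multi-indices in ℕⁿ, and every ε > 0, there exists a holomorphic polynomial Q on ℂⁿ such that sup_{z ∈ L} ‖(D^ℓ f)(z) − (D^ℓ Q)(z)‖ < ε for every ℓ ∈ F (where D^ℓ f denotes the continuous extension to the closure). In other words, the polynomials are dense in A^∞(Ω). -/

import Mathlib

open Set Filter Topology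

noncomputable section

/-- Evaluation of a multivariate polynomial as a function on `ℂⁿ = Fin n → ℂ`. -/
def mvEval {n : ℕ} (p : MvPolynomial (Fin n) ℂ) : (Fin n → ℂ) → ℂ :=
  fun z => MvPolynomial.eval z p

/-- The polynomially convex hull of a set in `ℂⁿ`. -/
def polyHull {n : ℕ} (K : Set (Fin n → ℂ)) : Set (Fin n → ℂ) :=
  {z | ∀ p : MvPolynomial (Fin n) ℂ, ‖mvEval p z‖ ≤ sSup ((fun w => ‖mvEval p w‖) '' K)}

/-- A set in `ℂⁿ` is polynomially convex if it equals its polynomially convex hull. -/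
def IsPolyConvex {n : ℕ} (K : Set (Fin n → ℂ)) : Prop := polyHull K = K

/-- The polynomially convex hull of a subset of `ℂ`. -/
def polyHull1 (F : Set ℂ) : Set ℂ :=
  {z | ∀ p : Polynomial ℂ, ‖p.eval z‖ ≤ sSup ((fun w => ‖p.eval w‖) '' F)}

/-- A subset of `ℂ` is polynomially convex if it equals its polynomially convex hull. -/
def IsPolyConvex1 (F : Set ℂ) : Prop := polyHull1 F = F

/-- Partial derivative in the `i`-th coordinate direction. -/
def pd {n : ℕ} (i : Fin n) (f : (Fin n → ℂ) → ℂ) : (Fin n → ℂ) → ℂ :=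
  fun z => fderiv ℂ f z (Pi.single i 1)

/-- Iterated partial derivative `D^ℓ = ∂^{ℓ₁+⋯+ℓₙ}/∂z₁^{ℓ₁}⋯∂zₙ^{ℓₙ}`. -/
def Dml {n : ℕ} (ℓ : Fin n → ℕ) (f : (Fin n → ℂ) → ℂ) : (Fin n → ℂ) → ℂ :=
  (List.finRange n).foldr (fun i g => (pd i)^[ℓ i] g) f

/-- Partial sums `S_λ` of a Taylor-type series around `ζ`, with coefficients computed from a
given family `g` of (extended) partial derivatives: the coefficient of the monomial
`(z-ζ)^{N_j}` is `g (N_j) ζ / (N_{j,1}! ⋯ N_{j,n}!)`. -/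
def pSumExt {n : ℕ} (Nj : ℕ → Fin n → ℕ) (g : (Fin n → ℕ) → (Fin n → ℂ) → ℂ)
    (ζ : Fin n → ℂ) (lam : ℕ) : (Fin n → ℂ) → ℂ :=
  fun z => ∑ j ∈ Finset.range (lam + 1),
    (((∏ i, Nat.factorial (Nj j i) : ℕ) : ℂ))⁻¹ * g (Nj j) ζ * ∏ i, (z i - ζ i) ^ (Nj j i)

/-- Partial sums `S_λ(f,ζ)` of the Taylor development of `f` around `ζ`. -/
def pSum {n : ℕ} (Nj : ℕ → Fin n → ℕ) (f : (Fin n → ℂ) → ℂ)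
    (ζ : Fin n → ℂ) (lam : ℕ) : (Fin n → ℂ) → ℂ :=
  pSumExt Nj (fun ℓ => Dml ℓ f) ζ lam

/-- The space `O(Ω)` of holomorphic functions on `Ω`. -/
def Ospace (n : ℕ) (Ω : Set (Fin n → ℂ)) : Type :=
  {f : (Fin n → ℂ) → ℂ // DifferentiableOn ℂ f Ω}

/-- Topology of uniform convergence on compact subsets of `Ω` on `O(Ω)` (the compact-open
topology induced via restriction to `Ω`). -/
instance (n : ℕ) (Ω : Set (Fin n → ℂ)) : TopologicalSpace (Ospace n Ω) :=
  TopologicalSpace.induced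
    (fun f : Ospace n Ω =>
      (⟨Ω.restrict f.1, continuousOn_iff_continuous_restrict.mp f.2.continuousOn⟩ : C(Ω, ℂ)))
    inferInstance

/-- Membership in `A^∞(Ω)`: `f` is holomorphic on `Ω` and each partial derivative `D^ℓ f`
extends continuously to the closure of `Ω`. -/
def AinfMem (n : ℕ) (Ω : Set (Fin n → ℂ)) (f : (Fin n → ℂ) → ℂ) : Prop :=
  DifferentiableOn ℂ f Ω ∧
    ∀ ℓ : Fin n → ℕ, ∃ g : (Fin n → ℂ) → ℂ,
      ContinuousOn g (closure Ω) ∧ Set.EqOn g (Dml ℓ f) Ω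

/-- The space `A^∞(Ω)`. -/
def AinfSpace (n : ℕ) (Ω : Set (Fin n → ℂ)) : Type :=
  {f : (Fin n → ℂ) → ℂ // AinfMem n Ω f}

/-- The chosen continuous extension of `D^ℓ f` to the closure of `Ω`, for `f ∈ A^∞(Ω)`.
(Its restriction to the closure of `Ω` is uniquely determined.) -/
def AinfExt {n : ℕ} {Ω : Set (Fin n → ℂ)} (f : AinfSpace n Ω) (ℓ : Fin n → ℕ) :
    (Fin n → ℂ) → ℂ :=
  Classical.choose (f.2.2 ℓ)

lemma AinfExt_continuousOn {n : ℕ} {Ω : Set (Fin n → ℂ)} (f : AinfSpace n Ω) (ℓ : Fin n → ℕ) :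
    ContinuousOn (AinfExt f ℓ) (closure Ω) :=
  (Classical.choose_spec (f.2.2 ℓ)).1

lemma AinfExt_eqOn {n : ℕ} {Ω : Set (Fin n → ℂ)} (f : AinfSpace n Ω) (ℓ : Fin n → ℕ) :
    Set.EqOn (AinfExt f ℓ) (Dml ℓ f.1) Ω :=
  (Classical.choose_spec (f.2.2 ℓ)).2

/-- Topology on `A^∞(Ω)`: uniform convergence of every partial derivative on every compact
subset of the closure of `Ω`. -/
instance (n : ℕ) (Ω : Set (Fin n → ℂ)) : TopologicalSpace (AinfSpace n Ω) :=
  TopologicalSpace.induced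
    (fun f : AinfSpace n Ω => fun ℓ : Fin n → ℕ =>
      (⟨(closure Ω).restrict (AinfExt f ℓ),
        continuousOn_iff_continuous_restrict.mp (AinfExt_continuousOn f ℓ)⟩ :
          C(closure Ω, ℂ)))
    inferInstance

/-- A smooth compact curve in `ℂⁿ`: the image of an injective `C^∞` map with
nowhere-vanishing derivative, defined on a compact interval (an arc) or on the
circle (a closed curve, modelled by a 1-periodic map). -/
def IsSmoothCompactCurve {n : ℕ} (K : Set (Fin n → ℂ)) : Prop :=
  ∃ γ : ℝ → (Fin n → ℂ), ContDiff ℝ (⊤ : ℕ∞) γ ∧ (∀ t, deriv γ t ≠ 0) ∧ K = γ '' Set.Icc 0 1 ∧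
    (Set.InjOn γ (Set.Icc 0 1) ∨ (Function.Periodic γ 1 ∧ Set.InjOn γ (Set.Ico 0 1)))

/-- A disjoint union of finitely many smooth compact curves. -/
def IsFiniteUnionOfSmoothCurves {n : ℕ} (K : Set (Fin n → ℂ)) : Prop :=
  ∃ (m : ℕ) (C : Fin m → Set (Fin n → ℂ)),
    (∀ i, IsSmoothCompactCurve (C i)) ∧ Pairwise (Function.onFun Disjoint C) ∧ K = ⋃ i, C i

/-!
Dilating `f` about a point `a` of the convex set `Ω` gives, for `r < 1`, functions
`z ↦ f (a + r (z - a))` holomorphic on a neighbourhood of `closure Ω` that is star-shaped about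
`a`; on a compact `L ⊆ closure Ω` their derivatives tend uniformly to the extensions of those of
`f` as `r → 1`.

It remains to approximate a function `f` holomorphic on a star-shaped open set `U`. For compact
`K ⊆ U`, the curve `s ↦ (z ↦ f (a + s (z - a)))` is holomorphic with values in `C(K, ℂ)`, and its
Taylor coefficients at `s = 0` are polynomials in `z`. By the identity theorem modulo the closure of
the polynomials, the curve stays in that closure up to `s = 1`, where its value is `f`. Cauchy's
estimates carry the approximation over to all derivatives.
-/

section HolomorphicMaps

variable {E F ι : Type*} [NormedAddCommGroup E] [NormedSpace ℂ E]
  [NormedAddCommGroup F] [NormedSpace ℂ F]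

theorem norm_fderiv_le_of_forall_mem_ball_norm_le {f : E → F} {c : E} {R C : ℝ} (hR : 0 < R)
    (hf : DifferentiableOn ℂ f (Metric.ball c R)) (hC : ∀ z ∈ Metric.ball c R, ‖f z‖ ≤ C) :
    ‖fderiv ℂ f c‖ ≤ 2 * C / R := by
  refine Complex.norm_fderiv_le_div_of_mapsTo_ball hf (fun z hz => ?_) hR
  rw [mem_closedBall_iff_norm]
  linarith [norm_sub_le (f z) (f c), hC z hz, hC c (Metric.mem_ball_self hR)]

theorem norm_sub_sub_fderiv_le {f : E → F} {c z : E} {R C : ℝ}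
    (hf : DifferentiableOn ℂ f (Metric.ball c R)) (hC : ∀ w ∈ Metric.ball c R, ‖f w‖ ≤ C)
    (hz : z ∈ Metric.ball c R) :
    ‖f z - f c - fderiv ℂ f c (z - c)‖ ≤ 4 * C * (‖z - c‖ / R) ^ 2 := by
  have hR : 0 < R := Metric.nonempty_ball.mp ⟨z, hz⟩
  have hcR := Metric.mem_ball_self (x := c) hR
  set g : E → F := fun w => f w - fderiv ℂ f c (w - c) with hg
  have hgc (w : E) : g w - g c = f w - f c - fderiv ℂ f c (w - c) := by simp [hg]; abel
  have hmaps : MapsTo g (Metric.ball c R) (Metric.closedBall (g c) (4 * C)) := fun w hw => by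
    have hlin : ‖fderiv ℂ f c (w - c)‖ ≤ 2 * C := calc
      _ ≤ 2 * C / R * R := ContinuousLinearMap.le_of_opNorm_le_of_le _
          (norm_fderiv_le_of_forall_mem_ball_norm_le hR hf hC) (mem_ball_iff_norm.mp hw).le
      _ = 2 * C := div_mul_cancel₀ _ hR.ne'
    rw [mem_closedBall_iff_norm, hgc]
    linarith [norm_sub_le (f w - f c) (fderiv ℂ f c (w - c)), norm_sub_le (f w) (f c),
      hC w hw, hC c hcR]
  have hlittle : (g · - g c) =o[𝓝 c] (fun w => ‖w - c‖ ^ 1) := by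
    simp only [hgc, pow_one]
    exact (hf.differentiableAt (Metric.ball_mem_nhds c hR)).hasFDerivAt.isLittleO.norm_right
  have := Complex.dist_le_mul_div_pow_of_mapsTo_ball_of_isLittleO
    (f := g) (hf.sub (by fun_prop)) hmaps hlittle hz
  rwa [dist_eq_norm, dist_eq_norm, hgc] at this

theorem tendstoUniformlyOn_fderiv_zero {f : ι → E → F} {p : Filter ι} {s : Set E} {δ : ℝ}
    (hδ : 0 < δ) (hf : ∀ᶠ i in p, DifferentiableOn ℂ (f i) (Metric.thickening δ s))
    (h : TendstoUniformlyOn f 0 p (Metric.thickening δ s)) :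
    TendstoUniformlyOn (fun i => fderiv ℂ (f i)) 0 p s := by
  rw [Metric.tendstoUniformlyOn_iff] at h ⊢
  intro ε hε
  filter_upwards [hf, h (ε * δ / 4) (by positivity)] with i hfi hi z hz
  have hball : Metric.ball z δ ⊆ Metric.thickening δ s := Metric.ball_subset_thickening hz δ
  have hle := norm_fderiv_le_of_forall_mem_ball_norm_le hδ (hfi.mono hball)
    fun w hw => by simpa using (hi w (hball hw)).le
  calc dist 0 (fderiv ℂ (f i) z) ≤ 2 * (ε * δ / 4) / δ := by simpa using hle
    _ = ε / 2 := by field_simp; norm_num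
    _ < ε := half_lt_self hε

theorem tendstoUniformlyOn_fderiv {f : ι → E → F} {g : E → F} {p : Filter ι} {s : Set E} {δ : ℝ}
    (hδ : 0 < δ) (hf : ∀ᶠ i in p, DifferentiableOn ℂ (f i) (Metric.thickening δ s))
    (hg : DifferentiableOn ℂ g (Metric.thickening δ s))
    (h : TendstoUniformlyOn f g p (Metric.thickening δ s)) :
    TendstoUniformlyOn (fun i => fderiv ℂ (f i)) (fderiv ℂ g) p s := by
  have hzero : TendstoUniformlyOn (fun i => f i - g) 0 p (Metric.thickening δ s) := by
    rw [Metric.tendstoUniformlyOn_iff] at h ⊢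
    simpa [dist_eq_norm, norm_sub_rev] using h
  have hderiv := tendstoUniformlyOn_fderiv_zero hδ (hf.mono fun i hi => hi.sub hg) hzero
  rw [Metric.tendstoUniformlyOn_iff] at hderiv ⊢
  intro ε hε
  filter_upwards [hf, hderiv ε hε] with i hfi hi z hz
  have hnhds := Metric.isOpen_thickening.mem_nhds (Metric.self_subset_thickening hδ s hz)
  simpa [fderiv_sub (hfi.differentiableAt hnhds) (hg.differentiableAt hnhds), dist_eq_norm,
    norm_sub_rev] using hi z hz

theorem uniformCauchySeqOn_fderiv {f : ι → E → F} {p : Filter ι} {s : Set E} {δ : ℝ}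
    (hδ : 0 < δ) (hf : ∀ᶠ i in p, DifferentiableOn ℂ (f i) (Metric.thickening δ s))
    (h : UniformCauchySeqOn f p (Metric.thickening δ s)) :
    UniformCauchySeqOn (fun i => fderiv ℂ (f i)) p s := by
  rw [SeminormedAddGroup.uniformCauchySeqOn_iff_tendstoUniformlyOn_zero] at h ⊢
  have hff := hf.prod_mk hf
  refine (tendstoUniformlyOn_fderiv_zero hδ (hff.mono fun i hi => hi.1.neg.add hi.2) h).congr ?_
  filter_upwards [hff] with i hi z hz
  have hnhds := Metric.isOpen_thickening.mem_nhds (Metric.self_subset_thickening hδ s hz)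
  have hdiff := hi.1.differentiableAt hnhds
  simp only [fderiv_add hdiff.neg (hi.2.differentiableAt hnhds), fderiv_neg]

theorem differentiableOn_of_tendstoUniformlyOn_thickening [CompleteSpace F] {f : ι → E → F}
    {g : E → F} {p : Filter ι} [p.NeBot] {s : Set E} {δ : ℝ} (hδ : 0 < δ) (hs : IsOpen s)
    (hf : ∀ᶠ i in p, DifferentiableOn ℂ (f i) (Metric.thickening δ s))
    (h : TendstoUniformlyOn f g p (Metric.thickening δ s)) : DifferentiableOn ℂ g s := by
  have hcauchy := uniformCauchySeqOn_fderiv hδ hf h.uniformCauchySeqOn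
  choose! g' hg' using fun z (hz : z ∈ s) =>
    cauchy_map_iff_exists_tendsto.mp (hcauchy.cauchy_map hz)
  have hunif := hcauchy.tendstoUniformlyOn_of_tendsto hg'
  have hsub := Metric.self_subset_thickening hδ s
  intro z hz
  refine (hasFDerivAt_of_tendstoUniformlyOnFilter (f := f)
    (hunif.tendstoUniformlyOnFilter.mono_right (le_principal_iff.mpr (hs.mem_nhds hz)))
    ?_ ?_).differentiableAt.differentiableWithinAt
  · filter_upwards [hf.prod_mk (hs.eventually_mem hz)] with i hi
    exact (hi.1.differentiableAt
      (Metric.isOpen_thickening.mem_nhds (hsub hi.2))).hasFDerivAt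
  · filter_upwards [hs.mem_nhds hz] with w hw using h.tendsto_at (hsub hw)

theorem eventually_norm_smul_lt {ε : ℝ} (hε : 0 < ε) (v : E) :
    ∀ᶠ t : ℂ in 𝓝[≠] 0, t ≠ 0 ∧ ‖t • v‖ < ε := by
  have hlim : Tendsto (fun t : ℂ => ‖t • v‖) (𝓝 0) (𝓝 0) :=
    Continuous.tendsto' (by fun_prop) _ _ (by simp)
  filter_upwards [self_mem_nhdsWithin,
    nhdsWithin_le_nhds (hlim.eventually_lt_const hε)] with t ht htv using ⟨ht, htv⟩

theorem tendstoUniformlyOn_inv_smul_sub {f : E → F} {s : Set E} {R C : ℝ} (hR : 0 < R)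
    (hf : DifferentiableOn ℂ f (Metric.thickening R s))
    (hC : ∀ z ∈ Metric.thickening R s, ‖f z‖ ≤ C) (v : E) :
    TendstoUniformlyOn (fun (t : ℂ) z => t⁻¹ • (f (z + t • v) - f z)) (fun z => fderiv ℂ f z v)
      (𝓝[≠] 0) s := by
  have hbound {t : ℂ} (ht : t ≠ 0 ∧ ‖t • v‖ < R) {z : E} (hz : z ∈ s) :
      ‖fderiv ℂ f z v - t⁻¹ • (f (z + t • v) - f z)‖ ≤ 4 * C * (‖v‖ / R) ^ 2 * ‖t‖ := by
    have hball : Metric.ball z R ⊆ Metric.thickening R s := Metric.ball_subset_thickening hz R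
    have htaylor := norm_sub_sub_fderiv_le (z := z + t • v) (hf.mono hball)
      (fun w hw => hC w (hball hw)) (by simpa using ht.2)
    have hquot : fderiv ℂ f z v - t⁻¹ • (f (z + t • v) - f z) =
        -(t⁻¹ • (f (z + t • v) - f z - fderiv ℂ f z (t • v))) := by
      rw [smul_sub _ (_ - _), map_smul, inv_smul_smul₀ ht.1, neg_sub]
    rw [add_sub_cancel_left] at htaylor
    rw [hquot, norm_neg, norm_smul, norm_inv, inv_mul_le_iff₀ (norm_pos_iff.mpr ht.1)]
    refine htaylor.trans_eq ?_
    rw [norm_smul]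
    ring
  have hlim : Tendsto (fun t : ℂ => 4 * C * (‖v‖ / R) ^ 2 * ‖t‖) (𝓝[≠] 0) (𝓝 0) :=
    (Continuous.tendsto' (by fun_prop) _ _ (by simp)).mono_left nhdsWithin_le_nhds
  rw [Metric.tendstoUniformlyOn_iff]
  intro ε hε
  filter_upwards [eventually_norm_smul_lt hR v, hlim.eventually_lt_const hε] with t ht htε z hz
  rw [dist_eq_norm]
  exact (hbound ht hz).trans_lt htε

theorem differentiableOn_fderiv_apply [CompleteSpace F] {f : E → F} {U : Set E} (hU : IsOpen U)
    (hf : DifferentiableOn ℂ f U) (v : E) : DifferentiableOn ℂ (fun z => fderiv ℂ f z v) U := by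
  intro c hc
  have hbdd : ∀ᶠ z in 𝓝 c, ‖f z‖ ≤ ‖f c‖ + 1 :=
    (hf.differentiableAt (hU.mem_nhds hc)).continuousAt.norm.eventually_le_const (lt_add_one _)
  obtain ⟨R, hR, hball⟩ := Metric.eventually_nhds_iff_ball.mp (hbdd.and (hU.eventually_mem hc))
  have hthick₂ : Metric.thickening (R / 2) (Metric.ball c (R / 2)) ⊆ Metric.ball c R :=
    (Metric.thickening_ball ..).trans_eq (by rw [add_halves])
  have hthick₄ : Metric.thickening (R / 4) (Metric.ball c (R / 4)) ⊆ Metric.ball c (R / 2) :=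
    (Metric.thickening_ball ..).trans_eq (by ring_nf)
  have hdiff : DifferentiableOn ℂ f (Metric.ball c R) := hf.mono fun z hz => (hball z hz).2
  have hquot : ∀ᶠ t : ℂ in 𝓝[≠] 0, DifferentiableOn ℂ
      (fun z => t⁻¹ • (f (z + t • v) - f z)) (Metric.ball c (R / 2)) := by
    filter_upwards [eventually_norm_smul_lt (half_pos hR) v] with t ht
    have hmaps : MapsTo (fun z => z + t • v) (Metric.ball c (R / 2)) (Metric.ball c R) :=
      fun z hz => hthick₂ (Metric.mem_thickening_iff.mpr ⟨z, hz, by simpa using ht.2⟩)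
    exact ((hdiff.comp (by fun_prop) hmaps).sub
      (hdiff.mono (Metric.ball_subset_ball (half_le_self hR.le)))).const_smul t⁻¹
  have hlim := tendstoUniformlyOn_inv_smul_sub (half_pos hR) (hdiff.mono hthick₂)
    (fun z hz => (hball z (hthick₂ hz)).1) v
  exact ((differentiableOn_of_tendstoUniformlyOn_thickening (by positivity) Metric.isOpen_ball
    (hquot.mono fun t ht => ht.mono hthick₄) (hlim.mono hthick₄)).differentiableAt
      (Metric.ball_mem_nhds c (by positivity))).differentiableWithinAt

theorem contDiffOn_of_complex_differentiableOn [FiniteDimensional ℂ E] [CompleteSpace F] {f : E → F}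
    {U : Set E} (hU : IsOpen U) (hf : DifferentiableOn ℂ f U) (m : ℕ) : ContDiffOn ℂ m f U := by
  induction m generalizing f with
  | zero => exact contDiffOn_zero.mpr hf.continuousOn
  | succ m ih =>
    rw [Nat.cast_succ, contDiffOn_succ_iff_fderiv_of_isOpen hU]
    exact ⟨hf, by simp, contDiffOn_clm_apply.mpr fun v =>
      ih (differentiableOn_fderiv_apply hU hf v)⟩

theorem tendstoLocallyUniformlyOn_fderiv [LocallyCompactSpace E] {f : ι → E → F} {g : E → F}
    {p : Filter ι} {U : Set E} (hU : IsOpen U) (hf : ∀ᶠ i in p, DifferentiableOn ℂ (f i) U)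
    (hg : DifferentiableOn ℂ g U) (h : TendstoLocallyUniformlyOn f g p U) :
    TendstoLocallyUniformlyOn (fun i => fderiv ℂ (f i)) (fderiv ℂ g) p U := by
  rw [tendstoLocallyUniformlyOn_iff_forall_isCompact hU] at h ⊢
  intro K hKU hK
  obtain ⟨K', hK', hKK', hK'U⟩ := exists_compact_between hK hU hKU
  obtain ⟨δ, hδ, hthick⟩ := hK.exists_thickening_subset_open isOpen_interior hKK'
  have hthickK' := hthick.trans interior_subset
  have hthickU := hthickK'.trans hK'U
  exact tendstoUniformlyOn_fderiv hδ (hf.mono fun i hi => hi.mono hthickU) (hg.mono hthickU)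
    ((h K' hK'U hK').mono hthickK')

end HolomorphicMaps

section VectorValued

variable {E F ι : Type*} [NormedAddCommGroup E] [NormedSpace ℂ E]
  [NormedAddCommGroup F] [NormedSpace ℂ F]

theorem circleIntegral_clm_comp_comm [CompleteSpace E] [CompleteSpace F] (φ : E →L[ℂ] F)
    {f : ℂ → E} {c : ℂ} {R : ℝ} (hf : CircleIntegrable f c R) :
    (∮ z in C(c, R), φ (f z)) = φ (∮ z in C(c, R), f z) := by
  simp only [circleIntegral, ← map_smul]
  exact φ.intervalIntegral_comp_comm hf.out

theorem differentiableOn_of_forall_clm [CompleteSpace E] [CompleteSpace F] {f : ℂ → E}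
    {U : Set ℂ} (hU : IsOpen U) (hf : ContinuousOn f U) (φ : ι → E →L[ℂ] F)
    (hφ : ∀ x y, (∀ i, φ i x = φ i y) → x = y)
    (hφf : ∀ i, DifferentiableOn ℂ (fun z => φ i (f z)) U) : DifferentiableOn ℂ f U := by
  intro c hc
  obtain ⟨R, hR, hball⟩ := Metric.nhds_basis_closedBall.mem_iff.mp (hU.mem_nhds hc)
  lift R to NNReal using hR.le
  have hcont : ContinuousOn f (Metric.closedBall c R) := hf.mono hball
  have hsphere : ContinuousOn f (Metric.sphere c R) := hcont.mono Metric.sphere_subset_closedBall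
  have hcauchy : EqOn f
      (fun w => (2 * Real.pi * Complex.I : ℂ)⁻¹ • ∮ z in C(c, R), (z - w)⁻¹ • f z)
      (Metric.ball c R) := fun w hw => hφ _ _ fun i => by
    have hkernel : ContinuousOn (fun z => (z - w)⁻¹) (Metric.sphere c R) :=
      (by fun_prop : ContinuousOn (fun z => z - w) _).inv₀ fun z hz =>
        sub_ne_zero.mpr (ne_of_mem_of_not_mem hz (Metric.mem_ball.mp hw).ne)
    have hcomm := circleIntegral_clm_comp_comm (φ i) ((hkernel.smul hsphere).circleIntegrable R.2)
    simp only [Pi.smul_apply', map_smul] at hcomm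
    calc φ i (f w)
        = (2 * Real.pi * Complex.I : ℂ)⁻¹ • ∮ z in C(c, R), (z - w)⁻¹ • φ i (f z) :=
          (((hφf i).diffContOnCl_ball hball).two_pi_i_inv_smul_circleIntegral_sub_inv_smul
            hw).symm
      _ = φ i ((2 * Real.pi * Complex.I : ℂ)⁻¹ • ∮ z in C(c, R), (z - w)⁻¹ • f z) := by
          exact ((map_smul (φ i) _ _).trans (congrArg _ hcomm.symm)).symm
  have hseries := hasFPowerSeriesOn_cauchy_integral (hsphere.circleIntegrable R.2) hR
  have hc0 : c ∈ Metric.ball c R := Metric.mem_ball_self hR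
  exact (hseries.analyticAt.differentiableAt.congr_of_eventuallyEq
    (hcauchy.eventuallyEq_of_mem (Metric.isOpen_ball.mem_nhds hc0))).differentiableWithinAt

theorem mem_of_forall_iteratedDeriv_mem [CompleteSpace E] (M : Submodule ℂ E)
    (hM : IsClosed (M : Set E)) {f : ℂ → E} {U : Set ℂ} (hU : IsOpen U) (hUc : IsPreconnected U)
    (hf : DifferentiableOn ℂ f U) {c z : ℂ} (hc : c ∈ U) (hfc : ∀ k, iteratedDeriv k f c ∈ M)
    (hz : z ∈ U) : f z ∈ M := by
  have : IsClosed (M : Set E) := hM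
  obtain ⟨R, hR, hball⟩ := Metric.isOpen_iff.mp hU c hc
  have hnear : ∀ᶠ w in 𝓝 c, f w ∈ M := by
    filter_upwards [Metric.ball_mem_nhds c hR] with w hw
    have hsum := Complex.hasSum_taylorSeries_on_ball (hf.mono hball) hw
    exact hM.mem_of_tendsto hsum (.of_forall fun s =>
      M.sum_mem fun k _ => M.smul_mem _ (M.smul_mem _ (hfc k)))
  -- Modulo `M` the germ of `f` at `c` vanishes, so the identity theorem applies in `E ⧸ M`.
  have hquot : AnalyticOnNhd ℂ (fun w => M.mkQL (f w)) U :=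
    (M.mkQL.differentiable.comp_differentiableOn hf).analyticOnNhd hU
  have hzero := hquot.eqOn_zero_of_preconnected_of_eventuallyEq_zero hUc hc
    (hnear.mono fun w hw => by simpa using hw)
  simpa using hzero hz

end VectorValued

theorem iteratedDeriv_comp_add_smul {𝕜 E F : Type*} [NontriviallyNormedField 𝕜]
    [NormedAddCommGroup E] [NormedSpace 𝕜 E] [NormedAddCommGroup F] [NormedSpace 𝕜 F]
    {f : E → F} {a v : E} {t : 𝕜} {k : ℕ} (hf : ContDiffAt 𝕜 k f (a + t • v)) :
    iteratedDeriv k (fun s : 𝕜 => f (a + s • v)) t =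
      iteratedFDeriv 𝕜 k f (a + t • v) fun _ => v := by
  induction k generalizing t with
  | zero => simp
  | succ k ih =>
    have hline : Tendsto (fun s : 𝕜 => a + s • v) (𝓝 t) (𝓝 (a + t • v)) :=
      Continuous.tendsto (by fun_prop) t
    have hk : ContDiffAt 𝕜 k f (a + t • v) := hf.of_le (by simp)
    have hnear := hline.eventually (hk.eventually (by simp))
    rw [iteratedDeriv_succ, EventuallyEq.deriv_eq (hnear.mono fun s hs => ih hs)]
    exact hf.deriv_fderiv_add_smul

theorem exists_mvPolynomial_eval_eq_apply_const_sub {R σ ι : Type*} [CommRing R] [Finite σ]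
    [Finite ι] (m : MultilinearMap R (fun _ : ι => σ → R) R) (a : σ → R) :
    ∃ q : MvPolynomial σ R, ∀ z, MvPolynomial.eval z q = m fun _ => z - a := by
  classical
  have := Fintype.ofFinite σ
  have := Fintype.ofFinite ι
  refine ⟨∑ r : ι → σ, (∏ i, (MvPolynomial.X (r i) - MvPolynomial.C (a (r i)))) *
    MvPolynomial.C (m fun i => Pi.single (r i) 1), fun z => ?_⟩
  rw [pi_eq_sum_univ' (z - a), MultilinearMap.map_sum]
  simp [MultilinearMap.map_smul_univ]

section Dilation

variable {E F : Type*} [NormedAddCommGroup E] [NormedSpace ℂ E] [NormedAddCommGroup F]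

/-- The complex dilation factors about `a` that map `K` into `U`. -/
def dilationDomain (a : E) (K U : Set E) : Set ℂ :=
  {s | MapsTo (AffineMap.homothety a s) K U}

theorem isOpen_dilationDomain {a : E} {K U : Set E} (hK : IsCompact K) (hU : IsOpen U) :
    IsOpen (dilationDomain a K U) := by
  refine isOpen_iff_eventually.mpr fun s hs => hK.eventually_forall_of_forall_eventually
    fun z hz => ?_
  have hcont : Continuous fun p : ℂ × E => AffineMap.homothety a p.1 p.2 := by
    simp only [AffineMap.homothety_apply]
    fun_prop
  exact hcont.continuousAt.eventually (hU.eventually_mem (hs hz))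

theorem ofReal_mem_dilationDomain {a : E} {K U : Set E} (hUa : StarConvex ℝ a U) (hKU : K ⊆ U)
    {t : ℝ} (ht : t ∈ Icc (0 : ℝ) 1) : (t : ℂ) ∈ dilationDomain a K U := fun z hz => by
  simpa [AffineMap.homothety_apply, add_comm] using hUa.add_smul_sub_mem (hKU hz) ht.1 ht.2

theorem one_mem_connectedComponentIn_dilationDomain {a : E} {K U : Set E}
    (hUa : StarConvex ℝ a U) (hKU : K ⊆ U) :
    (1 : ℂ) ∈ connectedComponentIn (dilationDomain a K U) 0 := by
  have hsegment : IsPreconnected (Complex.ofReal '' Icc (0 : ℝ) 1) :=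
    isPreconnected_Icc.image _ Complex.continuous_ofReal.continuousOn
  exact hsegment.subset_connectedComponentIn ⟨0, by simp⟩
    (by rintro _ ⟨t, ht, rfl⟩; exact ofReal_mem_dilationDomain hUa hKU ht) ⟨1, by simp⟩

/-- The family `s ↦ (z ↦ f (a + s (z - a)))` of dilates of `f` as a curve in `C(K, F)`, with the
junk value `0` at those `s` for which the dilate is not continuous on `K`. -/
def dilationCurve (f : E → F) (a : E) (K : Set E) (s : ℂ) : C(K, F) :=
  ContinuousMap.mkD (K.domRestrict fun z => f (AffineMap.homothety a s z)) 0

theorem continuousOn_uncurry_comp_homothety {f : E → F} {a : E} {K U : Set E}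
    (hf : ContinuousOn f U) :
    ContinuousOn (Function.uncurry fun (s : ℂ) z => f (AffineMap.homothety a s z))
      (dilationDomain a K U ×ˢ K) := by
  refine hf.comp (f := fun p : ℂ × E => AffineMap.homothety a p.1 p.2) ?_ fun p hp => hp.1 hp.2
  simp only [AffineMap.homothety_apply]
  fun_prop

theorem dilationCurve_apply {f : E → F} {a : E} {K U : Set E} (hf : ContinuousOn f U) {s : ℂ}
    (hs : s ∈ dilationDomain a K U) (z : K) :
    dilationCurve f a K s z = f (AffineMap.homothety a s (z : E)) :=
  ContinuousMap.mkD_apply_of_continuousOn ((continuousOn_uncurry_comp_homothety hf).comp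
    (Continuous.prodMk_right s).continuousOn fun _ hz => ⟨hs, hz⟩)

variable [NormedSpace ℂ F]

theorem differentiableOn_dilationCurve [CompleteSpace F] {f : E → F} {a : E} {K U : Set E}
    [CompactSpace K] (hU : IsOpen U) (hf : DifferentiableOn ℂ f U) :
    DifferentiableOn ℂ (dilationCurve f a K) (dilationDomain a K U) := by
  refine differentiableOn_of_forall_clm
    (isOpen_dilationDomain (isCompact_iff_compactSpace.mpr ‹_›) hU)
    (ContinuousMap.continuousOn_mkD_restrict_of_uncurry _ _
      (continuousOn_uncurry_comp_homothety hf.continuousOn))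
    (ContinuousMap.evalCLM ℂ) (fun _ _ => ContinuousMap.ext) fun z => ?_
  have hline : Differentiable ℂ fun s : ℂ => AffineMap.homothety a s (z : E) := by
    simp only [AffineMap.homothety_apply, vsub_eq_sub, vadd_eq_add]
    fun_prop
  exact (hf.comp hline.differentiableOn fun s (hs : s ∈ dilationDomain a K U) => hs z.2).congr
    fun s hs => dilationCurve_apply hf.continuousOn hs z

theorem iteratedDeriv_dilationCurve_zero_apply [FiniteDimensional ℂ E] [CompleteSpace F]
    {f : E → F} {a : E} {K U : Set E} [CompactSpace K] (hU : IsOpen U) (ha : a ∈ U)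
    (hf : DifferentiableOn ℂ f U) (k : ℕ) (z : K) :
    iteratedDeriv k (dilationCurve f a K) 0 z =
      iteratedFDeriv ℂ k f a fun _ => (z : E) - a := by
  have hV : dilationDomain a K U ∈ 𝓝 0 :=
    (isOpen_dilationDomain (isCompact_iff_compactSpace.mpr ‹_›) hU).mem_nhds
      fun z _ => by simpa using ha
  have hcurve : ContDiffAt ℂ k (dilationCurve f a K) 0 :=
    ((differentiableOn_dilationCurve hU hf).analyticAt hV).contDiffAt
  have hline : (fun s => ContinuousMap.evalCLM ℂ z (dilationCurve f a K s)) =ᶠ[𝓝 0]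
      fun s => f (a + s • ((z : E) - a)) := by
    filter_upwards [hV] with s hs
    simp [dilationCurve_apply hf.continuousOn hs, AffineMap.homothety_apply, add_comm]
  have hfa : ContDiffAt ℂ k f (a + (0 : ℂ) • ((z : E) - a)) := by
    simpa using (contDiffOn_of_complex_differentiableOn hU hf k).contDiffAt (hU.mem_nhds ha)
  calc iteratedDeriv k (dilationCurve f a K) 0 z
      = iteratedDeriv k (fun s => ContinuousMap.evalCLM ℂ z (dilationCurve f a K s)) 0 := by
        simp only [iteratedDeriv]
        exact (congrArg (· fun _ => 1) ((ContinuousMap.evalCLM ℂ z).iteratedFDeriv_comp_left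
          hcurve le_rfl)).symm
    _ = iteratedDeriv k (fun s => f (a + s • ((z : E) - a))) 0 := hline.iteratedDeriv_eq k
    _ = iteratedFDeriv ℂ k f a fun _ => (z : E) - a := by
        rw [iteratedDeriv_comp_add_smul hfa, zero_smul, add_zero]

end Dilation

section Runge

variable {σ : Type*}

/-- The restrictions to `K` of the holomorphic polynomials on `σ → ℂ`. -/
def polynomialSubmodule (K : Set (σ → ℂ)) : Submodule ℂ C(K, ℂ) where
  carrier := {h | ∃ q : MvPolynomial σ ℂ, ∀ z : K, h z = MvPolynomial.eval (z : σ → ℂ) q}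
  zero_mem' := ⟨0, by simp⟩
  add_mem' := by
    rintro _ _ ⟨p, hp⟩ ⟨q, hq⟩
    exact ⟨p + q, by simp [hp, hq]⟩
  smul_mem' := by
    rintro c _ ⟨p, hp⟩
    exact ⟨MvPolynomial.C c * p, by simp [hp]⟩

variable {a : σ → ℂ} {f : (σ → ℂ) → ℂ} {K U : Set (σ → ℂ)}

theorem dilationCurve_one_mem_topologicalClosure [Fintype σ] [CompactSpace K] (hU : IsOpen U)
    (ha : a ∈ U) (hUa : StarConvex ℝ a U) (hf : DifferentiableOn ℂ f U) (hKU : K ⊆ U) :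
    dilationCurve f a K 1 ∈ (polynomialSubmodule K).topologicalClosure := by
  have hV := isOpen_dilationDomain (a := a) (isCompact_iff_compactSpace.mpr ‹CompactSpace K›) hU
  have h0 : (0 : ℂ) ∈ dilationDomain a K U := fun z _ => by simpa using ha
  refine mem_of_forall_iteratedDeriv_mem _ (Submodule.isClosed_topologicalClosure _)
    hV.connectedComponentIn isPreconnected_connectedComponentIn
    ((differentiableOn_dilationCurve hU hf).mono (connectedComponentIn_subset _ _))
    (mem_connectedComponentIn h0) (fun k => Submodule.le_topologicalClosure _ ?_)
    (one_mem_connectedComponentIn_dilationDomain hUa hKU)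
  obtain ⟨q, hq⟩ := exists_mvPolynomial_eval_eq_apply_const_sub
    (iteratedFDeriv ℂ k f a).toMultilinearMap a
  exact ⟨q, fun z => (iteratedDeriv_dilationCurve_zero_apply hU ha hf k z).trans (hq z).symm⟩

theorem exists_mvPolynomial_forall_mem_norm_sub_eval_lt [Finite σ] (hU : IsOpen U)
    (hUa : StarConvex ℝ a U) (hf : DifferentiableOn ℂ f U) (hK : IsCompact K) (hKU : K ⊆ U)
    {ε : ℝ} (hε : 0 < ε) :
    ∃ q : MvPolynomial σ ℂ, ∀ z ∈ K, ‖f z - MvPolynomial.eval z q‖ < ε := by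
  obtain rfl | hne := K.eq_empty_or_nonempty
  · simp
  have := Fintype.ofFinite σ
  have : CompactSpace K := isCompact_iff_compactSpace.mp hK
  have ha : a ∈ U := hUa.mem (hne.mono hKU)
  obtain ⟨h, ⟨q, hq⟩, hdist⟩ := Metric.mem_closure_iff.mp
    (dilationCurve_one_mem_topologicalClosure hU ha hUa hf hKU) ε hε
  refine ⟨q, fun z hz => ?_⟩
  have hone : dilationCurve f a K 1 ⟨z, hz⟩ = f z := by
    rw [dilationCurve_apply hf.continuousOn fun w hw => by simpa using hKU hw]
    simp
  rw [← hone, ← hq ⟨z, hz⟩, ← dist_eq_norm]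
  exact (ContinuousMap.dist_apply_le_dist _).trans_lt hdist

theorem exists_tendstoLocallyUniformlyOn_mvPolynomial_eval [Finite σ] (hU : IsOpen U)
    (hUa : StarConvex ℝ a U) (hf : DifferentiableOn ℂ f U) :
    ∃ q : ℕ → MvPolynomial σ ℂ,
      TendstoLocallyUniformlyOn (fun k z => MvPolynomial.eval z (q k)) f atTop U := by
  have : LocallyCompactSpace U := hU.locallyCompactSpace
  let κ := CompactExhaustion.choice U
  choose q hq using fun k : ℕ => exists_mvPolynomial_forall_mem_norm_sub_eval_lt hU hUa hf
    ((κ.isCompact k).image continuous_subtype_val) (Subtype.coe_image_subset U (κ k))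
    (Nat.one_div_pos_of_nat (α := ℝ) (n := k))
  refine ⟨q, (tendstoLocallyUniformlyOn_iff_forall_isCompact hU).mpr fun K hKU hK => ?_⟩
  obtain ⟨N, hN⟩ := κ.exists_superset_of_isCompact
    (IsInducing.subtypeVal.isCompact_preimage' hK (by simpa using hKU))
  refine Metric.tendstoUniformlyOn_iff.mpr fun ε hε => ?_
  filter_upwards [eventually_ge_atTop N,
    tendsto_one_div_add_atTop_nhds_zero_nat.eventually_lt_const hε] with k hNk hkε z hz
  rw [dist_eq_norm]
  exact (hq k z ⟨⟨z, hKU hz⟩, κ.subset hNk (hN hz), rfl⟩).trans hkε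

end Runge

section MultiIndex

variable {n : ℕ}

theorem Dml_induction {P : ℕ → (((Fin n → ℂ) → ℂ) → (Fin n → ℂ) → ℂ) → Prop} (zero : P 0 id)
    (succ : ∀ m T i, P m T → P (m + 1) (pd i ∘ T)) (ℓ : Fin n → ℕ) : P (∑ i, ℓ i) (Dml ℓ) := by
  have iterate (m T i) (hT : P m T) (k : ℕ) : P (k + m) ((pd i)^[k] ∘ T) := by
    induction k with
    | zero => simpa using hT
    | succ k ih => rw [Function.iterate_succ', Nat.add_right_comm]; exact succ _ _ i ih
  have foldr (l : List (Fin n)) :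
      P (l.map ℓ).sum fun f => l.foldr (fun i g => (pd i)^[ℓ i] g) f := by
    induction l with
    | nil => exact zero
    | cons i l ih => rw [List.map_cons, List.sum_cons]; exact iterate _ _ i ih (ℓ i)
  rw [Fin.sum_univ_def]
  exact foldr (List.finRange n)

theorem tendstoLocallyUniformlyOn_Dml {ι : Type*} {p : Filter ι} {U : Set (Fin n → ℂ)}
    (hU : IsOpen U) {f : ι → (Fin n → ℂ) → ℂ} {g : (Fin n → ℂ) → ℂ}
    (hf : ∀ᶠ i in p, DifferentiableOn ℂ (f i) U) (hg : DifferentiableOn ℂ g U)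
    (h : TendstoLocallyUniformlyOn f g p U) (ℓ : Fin n → ℕ) :
    TendstoLocallyUniformlyOn (fun i => Dml ℓ (f i)) (Dml ℓ g) p U := by
  refine (Dml_induction (P := fun _ T => (∀ᶠ i in p, DifferentiableOn ℂ (T (f i)) U) ∧
    DifferentiableOn ℂ (T g) U ∧ TendstoLocallyUniformlyOn (fun i => T (f i)) (T g) p U)
    ⟨hf, hg, h⟩ (fun _ T j ⟨hTf, hTg, hT⟩ => ?_) ℓ).2.2
  refine ⟨hTf.mono fun i hi => differentiableOn_fderiv_apply hU hi _,
    differentiableOn_fderiv_apply hU hTg _, ?_⟩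
  exact (ContinuousLinearMap.apply ℂ ℂ (Pi.single j 1 : Fin n → ℂ)).uniformContinuous
    |>.comp_tendstoLocallyUniformlyOn
      (tendstoLocallyUniformlyOn_fderiv hU hTf hTg hT)

theorem pd_const_mul_comp_homothety (i : Fin n) (c r : ℂ) (a : Fin n → ℂ)
    (f : (Fin n → ℂ) → ℂ) :
    pd i (fun z => c * f (AffineMap.homothety a r z)) =
      fun z => c * r * pd i f (AffineMap.homothety a r z) := by
  ext z
  have hcomp : fderiv ℂ (fun w => f (AffineMap.homothety a r w)) z =
      r • fderiv ℂ f (AffineMap.homothety a r z) := by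
    simp only [AffineMap.homothety_apply, vsub_eq_sub, vadd_eq_add]
    rw [fderiv_comp_sub (f := fun w => f (r • w + a)) a,
      fderiv_comp_smul (f := fun w => f (w + a)), fderiv_comp_add_right]
  have hconst : fderiv ℂ (fun w => c * f (AffineMap.homothety a r w)) z =
      c • fderiv ℂ (fun w => f (AffineMap.homothety a r w)) z :=
    congrFun (fderiv_const_smul_field (f := fun w => f (AffineMap.homothety a r w)) c) z
  simp [pd, hconst, hcomp, mul_assoc]

theorem Dml_comp_homothety (ℓ : Fin n → ℕ) (r : ℂ) (a : Fin n → ℂ) (f : (Fin n → ℂ) → ℂ) :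
    Dml ℓ (fun z => f (AffineMap.homothety a r z)) =
      fun z => r ^ (∑ i, ℓ i) * Dml ℓ f (AffineMap.homothety a r z) := by
  refine Dml_induction (P := fun m T => T (fun z => f (AffineMap.homothety a r z)) =
    fun z => r ^ m * T f (AffineMap.homothety a r z)) (by simp) (fun m T i hT => ?_) ℓ
  rw [Function.comp_apply, hT, pd_const_mul_comp_homothety, pow_succ]
  rfl

theorem differentiable_mvEval (p : MvPolynomial (Fin n) ℂ) : Differentiable ℂ (mvEval p) :=
  fun z => (AnalyticOnNhd.eval_mvPolynomial p z (mem_univ z)).differentiableAt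

end MultiIndex

section Homothety

theorem starConvex_of_mapsTo_homothety {E : Type*} [AddCommGroup E] [Module ℂ E] {a : E}
    {Ω : Set E} (hΩ : ∀ r ∈ Ico (0 : ℝ) 1, MapsTo (AffineMap.homothety a (r : ℂ)) Ω Ω) :
    StarConvex ℝ a Ω := by
  intro y hy s t hs ht hst
  obtain rfl | hs := hs.eq_or_lt
  · obtain rfl : t = 1 := by linarith
    simpa using hy
  · convert hΩ t ⟨ht, by linarith⟩ hy using 1
    obtain rfl : s = 1 - t := by linarith
    rw [AffineMap.homothety_apply, vsub_eq_sub, vadd_eq_add, Complex.coe_smul]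
    module

theorem starConvex_preimage_homothety {E : Type*} [AddCommGroup E] [Module ℂ E] {a : E}
    {Ω : Set E} (hΩ : StarConvex ℝ a Ω) (c : ℂ) :
    StarConvex ℝ a (AffineMap.homothety a c ⁻¹' Ω) := by
  intro y hy s t hs ht hst
  rw [mem_preimage]
  convert hΩ (mem_preimage.mp hy) hs ht hst using 1
  obtain rfl : s = 1 - t := by linarith
  simp only [AffineMap.homothety_apply, vsub_eq_sub, vadd_eq_add, ← Complex.coe_smul]
  push_cast
  module

theorem exists_forall_mapsTo_homothety_of_convex {E : Type*} [NormedAddCommGroup E]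
    [NormedSpace ℂ E] {Ω : Set E} (hΩo : IsOpen Ω) (hΩ : Convex ℝ Ω) :
    ∃ a : E, ∀ r ∈ Ico (0 : ℝ) 1,
      MapsTo (AffineMap.homothety a (r : ℂ)) (closure Ω) Ω := by
  obtain rfl | ⟨a, ha⟩ := Ω.eq_empty_or_nonempty
  · simp
  refine ⟨a, fun r hr z hz => ?_⟩
  have hmem : z + (1 - r) • (a - z) ∈ interior Ω := hΩ.add_smul_sub_mem_interior' hz
    (hΩo.interior_eq.symm ▸ ha) ⟨by linarith [hr.2], by linarith [hr.1]⟩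
  convert interior_subset hmem using 1
  rw [AffineMap.homothety_apply, vsub_eq_sub, vadd_eq_add, Complex.coe_smul]
  module

end Homothety

section StronglyStarShaped

variable {n : ℕ} {a : Fin n → ℂ} {Ω L : Set (Fin n → ℂ)}

theorem exists_mvPolynomial_forall_norm_Dml_sub_lt (hΩ : IsOpen Ω) (hΩa : StarConvex ℝ a Ω)
    {f : (Fin n → ℂ) → ℂ} (hf : DifferentiableOn ℂ f Ω) (hL : IsCompact L) (hLΩ : L ⊆ Ω)
    (F : Finset (Fin n → ℕ)) {ε : ℝ} (hε : 0 < ε) :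
    ∃ Q : MvPolynomial (Fin n) ℂ, ∀ ℓ ∈ F, ∀ z ∈ L, ‖Dml ℓ f z - Dml ℓ (mvEval Q) z‖ < ε := by
  obtain ⟨q, hq⟩ := exists_tendstoLocallyUniformlyOn_mvPolynomial_eval hΩ hΩa hf
  have hDml (ℓ) : ∀ᶠ k in atTop, ∀ z ∈ L, ‖Dml ℓ f z - Dml ℓ (mvEval (q k)) z‖ < ε := by
    have hlim := tendstoLocallyUniformlyOn_Dml (f := fun k => mvEval (q k)) hΩ
      (.of_forall fun k => (differentiable_mvEval (q k)).differentiableOn) hf hq ℓ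
    simpa only [dist_eq_norm] using Metric.tendstoUniformlyOn_iff.mp
      ((tendstoLocallyUniformlyOn_iff_forall_isCompact hΩ).mp hlim L hLΩ hL) ε hε
  obtain ⟨k, hk⟩ := ((eventually_all_finset F).mpr fun ℓ _ => hDml ℓ).exists
  exact ⟨q k, hk⟩

theorem eventually_norm_sub_pow_mul_comp_homothety_lt {g : (Fin n → ℂ) → ℂ}
    {S : Set (Fin n → ℂ)} (hg : ContinuousOn g S) (hL : IsCompact L)
    (hLS : ∀ r ∈ Icc (0 : ℝ) 1, MapsTo (AffineMap.homothety a (r : ℂ)) L S) (m : ℕ) {ε : ℝ}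
    (hε : 0 < ε) :
    ∀ᶠ r : ℝ in 𝓝[<] 1, ∀ z ∈ L, ‖g z - (r : ℂ) ^ m * g (AffineMap.homothety a (r : ℂ) z)‖ < ε := by
  have hcont : ContinuousOn
      (Function.uncurry fun (r : ℝ) z => (r : ℂ) ^ m * g (AffineMap.homothety a (r : ℂ) z))
      (Icc 0 1 ×ˢ L) := by
    refine ContinuousOn.mul (by fun_prop) (hg.comp (f := fun p : ℝ × (Fin n → ℂ) =>
      AffineMap.homothety a (p.1 : ℂ) p.2) ?_ fun p hp => hLS p.1 hp.1 hp.2)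
    simp only [AffineMap.homothety_apply]
    fun_prop
  obtain ⟨v, hv, hvε⟩ := hL.mem_uniformity_of_prod hcont (right_mem_Icc.mpr zero_le_one)
    (Metric.dist_mem_uniformity hε)
  have hle : 𝓝[<] (1 : ℝ) ≤ 𝓝[Icc 0 1] 1 :=
    nhdsWithin_le_of_mem (Icc_mem_nhdsLT_of_mem ⟨zero_lt_one, le_rfl⟩)
  filter_upwards [hle hv] with r hr z hz
  simpa [dist_eq_norm, norm_sub_rev] using hvε r hr z hz

theorem prop3_1_general (hΩo : IsOpen Ω)
    (hΩa : ∀ r ∈ Ico (0 : ℝ) 1, MapsTo (AffineMap.homothety a (r : ℂ)) (closure Ω) Ω)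
    {f : (Fin n → ℂ) → ℂ} (hf : DifferentiableOn ℂ f Ω) (F : Finset (Fin n → ℕ))
    {g : (Fin n → ℕ) → (Fin n → ℂ) → ℂ}
    (hg : ∀ ℓ ∈ F, ContinuousOn (g ℓ) (closure Ω) ∧ EqOn (g ℓ) (Dml ℓ f) Ω)
    (hL : IsCompact L) (hLΩ : L ⊆ closure Ω) {ε : ℝ} (hε : 0 < ε) :
    ∃ Q : MvPolynomial (Fin n) ℂ, ∀ ℓ ∈ F, ∀ z ∈ L, ‖g ℓ z - Dml ℓ (mvEval Q) z‖ < ε := by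
  have hΩL : ∀ r ∈ Icc (0 : ℝ) 1, MapsTo (AffineMap.homothety a (r : ℂ)) L (closure Ω) :=
    fun r hr z hz => by
      obtain rfl | hr1 := hr.2.eq_or_lt
      · simpa using hLΩ hz
      · exact subset_closure (hΩa r ⟨hr.1, hr1⟩ (hLΩ hz))
  have hdilate := (eventually_all_finset F).mpr fun ℓ hℓ =>
    eventually_norm_sub_pow_mul_comp_homothety_lt (hg ℓ hℓ).1 hL hΩL (∑ i, ℓ i) (half_pos hε)
  obtain ⟨r, hr, hr01⟩ := (hdilate.and (Ico_mem_nhdsLT zero_lt_one)).exists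
  have hdiff : DifferentiableOn ℂ (fun z => f (AffineMap.homothety a (r : ℂ) z))
      (AffineMap.homothety a (r : ℂ) ⁻¹' Ω) := by
    refine hf.comp (Differentiable.differentiableOn ?_) (mapsTo_preimage _ _)
    change Differentiable ℂ fun z => (r : ℂ) • (z - a) + a
    fun_prop
  obtain ⟨Q, hQ⟩ := exists_mvPolynomial_forall_norm_Dml_sub_lt
    (hΩo.preimage (AffineMap.homothety_continuous a (r : ℂ)))
    (starConvex_preimage_homothety (starConvex_of_mapsTo_homothety fun r hr =>
      (hΩa r hr).mono_left subset_closure) r) hdiff hL (fun z hz => hΩa r hr01 (hLΩ hz))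
    F (half_pos hε)
  refine ⟨Q, fun ℓ hℓ z hz => ?_⟩
  have happrox := hQ ℓ hℓ z hz
  simp only [Dml_comp_homothety, ← (hg ℓ hℓ).2 (hΩa r hr01 (hLΩ hz))] at happrox
  linarith [norm_sub_le_norm_sub_add_norm_sub (g ℓ z)
    ((r : ℂ) ^ (∑ i, ℓ i) * g ℓ (AffineMap.homothety a (r : ℂ) z)) (Dml ℓ (mvEval Q) z),
    hr ℓ hℓ z hz]

end StronglyStarShaped

/-- Proposition 3.1: polynomials are dense in `A^∞(Ω)` for convex open `Ω`. -/
theorem prop3_1 (n : ℕ) (Ω : Set (Fin n → ℂ)) (hΩo : IsOpen Ω) (hΩcv : Convex ℝ Ω)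
    (f : (Fin n → ℂ) → ℂ) (hf : DifferentiableOn ℂ f Ω)
    (g : (Fin n → ℕ) → (Fin n → ℂ) → ℂ)
    (hg : ∀ ℓ : Fin n → ℕ, ContinuousOn (g ℓ) (closure Ω) ∧ Set.EqOn (g ℓ) (Dml ℓ f) Ω)
    (L : Set (Fin n → ℂ)) (hLcpt : IsCompact L) (hLsub : L ⊆ closure Ω)
    (F : Finset (Fin n → ℕ)) (ε : ℝ) (hε : 0 < ε) :
    ∃ Q : MvPolynomial (Fin n) ℂ, ∀ ℓ ∈ F, ∀ z ∈ L, ‖g ℓ z - Dml ℓ (mvEval Q) z‖ < ε := by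
  obtain ⟨a, ha⟩ := exists_forall_mapsTo_homothety_of_convex hΩo hΩcv
  exact prop3_1_general hΩo ha hf F (fun ℓ _ => hg ℓ) hLcpt hLsub hε

end
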